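/- Let U be a finite universe, F a family of nonempty subsets of U, and κ an integer with 0 ≤ κ ≤ |U|. For every H ⊆ U, the tree obtained from T(U,F) by applying, at each cut 'u ≤ 0' with u ∉ H, the raising operation keeping the child that continues the path has zero errors on E(U,F) if and only if H intersects every member of F. Consequently, there is a decision tree obtainable from T(U,F) by subtree raising operations that has exactly κ+1 inner nodes and zero errors on E(U,F) if and only if U contains a hitting set of F of size κ. -/

import Mathlib

/-- The two class labels. -/
inductive Label where
  | blue
  | red
deriving DecidableEq

/-- A decision tree over examples `ι → ℝ` with classes `{blue, red}`:
every inner node carries a feature and a threshold, every leaf a class label.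
An example goes to the left child if its value in the node's feature is at most
the threshold, and to the right child otherwise. -/
inductive DTree (ι : Type) where
  | leaf (c : Label)
  | node (feat : ι) (thr : ℝ) (left right : DTree ι)

namespace DTree

variable {ι : Type}

/-- The class that a decision tree assigns to an example. -/
noncomputable def classify : DTree ι → (ι → ℝ) → Label
  | .leaf c, _ => c
  | .node f t l r, e => if e f ≤ t then l.classify e else r.classify e

/-- The routing path of an example (`false` = left child, `true` = right child);
it is the position of the leaf of the example. -/
noncomputable def route : DTree ι → (ι → ℝ) → List Bool
  | .leaf _, _ => []
  | .node f t l r, e => if e f ≤ t then false :: l.route e else true :: r.route e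

/-- The subtree rooted at a position (`none` if the position is not a node). -/
def subtreeAt : DTree ι → List Bool → Option (DTree ι)
  | T, [] => some T
  | .leaf _, _ :: _ => none
  | .node _ _ l r, b :: p => (if b then r else l).subtreeAt p

/-- Replace the subtree at a given position by another tree. -/
def replaceAt : DTree ι → List Bool → DTree ι → DTree ι
  | _, [], T' => T'
  | .leaf c, _ :: _, _ => .leaf c
  | .node f t l r, b :: p, T' =>
      if b then .node f t l (r.replaceAt p T') else .node f t (l.replaceAt p T') r

/-- The number of inner nodes of a decision tree. -/
def innerCount : DTree ι → ℕ
  | .leaf _ => 0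
  | .node _ _ l r => 1 + l.innerCount + r.innerCount

/-- The position `p` is an inner node of `T`. -/
def IsInnerPos (T : DTree ι) (p : List Bool) : Prop :=
  ∃ f t l r, T.subtreeAt p = some (.node f t l r)

/-- The position `p` is a node of `T`. -/
def IsNodePos (T : DTree ι) (p : List Bool) : Prop :=
  (T.subtreeAt p).isSome

/-- The feature and threshold of the inner node at position `p`. -/
def cutAt (T : DTree ι) (p : List Bool) : Option (ι × ℝ) :=
  match T.subtreeAt p with
  | some (.node f t _ _) => some (f, t)
  | _ => none

/-- The subtree raising operation at position `q` keeping the child in direction `b`: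
the subtree rooted at `q` is replaced by the subtree rooted at its `b`-child; it prunes
the node at `q` together with all inner nodes of the subtree rooted at the other child. -/
def raiseAt (T : DTree ι) (q : List Bool) (b : Bool) : DTree ι :=
  match T.subtreeAt q with
  | some (.node _ _ l r) => T.replaceAt q (if b then r else l)
  | _ => T

end DTree

/-- `E[T,p]`: the examples of `E` whose routing through `T` passes the position `p`. -/
noncomputable def reach {ι : Type} (E : Finset (ι → ℝ)) (T : DTree ι) (p : List Bool) :
    Finset (ι → ℝ) :=
  E.filter fun e => p <+: T.route e

/-- The number of errors of `T` on the training set `(E, lab)`. -/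
noncomputable def errCount {ι : Type} (T : DTree ι) (E : Finset (ι → ℝ))
    (lab : (ι → ℝ) → Label) : ℕ :=
  (E.filter fun e => T.classify e ≠ lab e).card

/-- A most frequent label of the labeled set `(E, lab)` (blue in case of a tie). -/
def majorityLabel {ι : Type} (E : Finset (ι → ℝ)) (lab : (ι → ℝ) → Label) : Label :=
  if (E.filter fun e => lab e = Label.red).card ≤ (E.filter fun e => lab e = Label.blue).card
  then Label.blue else Label.red

/-- One subtree replacement operation: some inner node of `T` is replaced by a leaf
labeled with a most frequent label of the examples reaching it. -/
def ReplStep {ι : Type} (E : Finset (ι → ℝ)) (lab : (ι → ℝ) → Label)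
    (T T' : DTree ι) : Prop :=
  ∃ p, T.IsInnerPos p ∧
    T' = T.replaceAt p (.leaf (majorityLabel (reach E T p) lab))

/-- `T` is a reasonable decision tree for `(E, lab)`: every node is reached by some
example and every leaf carries a most frequent label of the examples reaching it. -/
def Reasonable {ι : Type} (E : Finset (ι → ℝ)) (lab : (ι → ℝ) → Label)
    (T : DTree ι) : Prop :=
  (∀ p, T.IsNodePos p → (reach E T p).Nonempty) ∧
  (∀ p c, T.subtreeAt p = some (.leaf c) → ∀ c' : Label,
    ((reach E T p).filter fun e => lab e = c').card ≤
      ((reach E T p).filter fun e => lab e = c).card)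

/-- Apply a sequence of raising operations (given by positions and kept directions). -/
def applySeq {ι : Type} : DTree ι → List (List Bool × Bool) → DTree ι
  | T, [] => T
  | T, (q, b) :: rest => applySeq (T.raiseAt q b) rest

/-- Each raising operation of the sequence is applied at an inner node. -/
def ValidSeq {ι : Type} : DTree ι → List (List Bool × Bool) → Prop
  | _, [] => True
  | T, (q, b) :: rest => T.IsInnerPos q ∧ ValidSeq (T.raiseAt q b) rest

/-- The total number of inner nodes pruned by a sequence of raising operations. -/
def seqPruned {ι : Type} : DTree ι → List (List Bool × Bool) → ℕ
  | _, [] => 0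
  | T, (q, b) :: rest =>
      (match T.subtreeAt q with
        | some (.node _ _ l r) => 1 + DTree.innerCount (if b then l else r)
        | _ => 0) + seqPruned (T.raiseAt q b) rest

/-- `T'` is obtained from `T` by a (possibly empty) sequence of subtree raising
operations. -/
def RaisedFrom {ι : Type} (T T' : DTree ι) : Prop :=
  ∃ steps, ValidSeq T steps ∧ applySeq T steps = T'

/-- `T'` is obtained from `T` by a sequence of subtree raising operations pruning
exactly `m` inner nodes in total. -/
def RaisedFromPruning {ι : Type} (T : DTree ι) (m : ℕ) (T' : DTree ι) : Prop :=
  ∃ steps, ValidSeq T steps ∧ seqPruned T steps = m ∧ applySeq T steps = T'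

/-- Tracking the position of a node through one raising operation: nodes strictly
below the raised node on the discarded side, and the raised node itself, are pruned
(`none`); all other nodes survive at a possibly shifted position. -/
def stepMap (q : List Bool) (b : Bool) (p : List Bool) : Option (List Bool) :=
  if q <+: p then
    if q ++ [b] <+: p then some (q ++ p.drop (q.length + 1)) else none
  else some p

/-- Tracking the position of a node through a sequence of raising operations. -/
def seqMap : List (List Bool × Bool) → List Bool → Option (List Bool)
  | [], p => some p
  | (q, b) :: rest, p => (stepMap q b p).bind (seqMap rest)

/-- The number of errors of `T` on a multiset of labeled examples. -/
noncomputable def errCountM {ι : Type} (T : DTree ι) (E : Multiset ((ι → ℝ) × Label)) : ℕ :=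
  (E.filter fun q => T.classify q.1 ≠ q.2).card

/-- The 0/1 indicator vector of a set of coordinates. -/
def indVec {m : ℕ} (S : Finset (Fin m)) : Fin m → ℝ := fun i => if i ∈ S then 1 else 0

/-- The blue edge example of an edge `{v, w}`: value `1` exactly in the
coordinates `v` and `w`. -/
def edgeEx (n : ℕ) : Sym2 (Fin n) → (Fin (n + 1) → ℝ) :=
  Sym2.lift ⟨fun v w => indVec {v.castSucc, w.castSucc},
    fun v w => by simp only []; rw [Finset.pair_comm]⟩

/-- The blue vertex example of a vertex `v`: value `1` exactly in the coordinates
`v` and `d*` (the last coordinate). -/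
def vertEx (n : ℕ) (v : Fin n) : Fin (n + 1) → ℝ := indVec {v.castSucc, Fin.last n}

/-- The blue example with value `1` only in the coordinate `d*`. -/
def starEx (n : ℕ) : Fin (n + 1) → ℝ := indVec {Fin.last n}

/-- The labeling: the all-zero example is red, all other examples are blue. -/
noncomputable def labG (n : ℕ) : (Fin (n + 1) → ℝ) → Label :=
  fun e => if e = (fun _ => 0) then Label.red else Label.blue

/-- The training set `E(G)` of the independent-set construction. -/
noncomputable def EG {n : ℕ} (G : SimpleGraph (Fin n)) [DecidableRel G.Adj] :
    Finset (Fin (n + 1) → ℝ) :=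
  (G.edgeFinset.image (edgeEx n)) ∪ (Finset.univ.image (vertEx n)) ∪
    {starEx n, fun _ => 0}

/-- A descending path of cuts `f ≤ 0` (for `f` in the given list) whose right
children are blue leaves and whose left children continue the path, ending in the
given tree. -/
def chainB {m : ℕ} (fs : List (Fin m)) (tail : DTree (Fin m)) : DTree (Fin m) :=
  fs.foldr (fun f acc => DTree.node f 0 acc (.leaf .blue)) tail

/-- The decision tree `T(G)`: the path of cuts `v₁ ≤ 0, …, vₙ ≤ 0, d* ≤ 0`; at each
vertex cut the right child is a blue leaf; the final cut has a red left child and a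
blue right child. -/
def TG (n : ℕ) : DTree (Fin (n + 1)) :=
  chainB (List.ofFn fun i : Fin n => i.castSucc)
    (DTree.node (Fin.last n) 0 (.leaf .red) (.leaf .blue))

/-- The tree obtained from `T(G)` by applying, at each cut `v ≤ 0` with `v ∈ R`,
the raising operation keeping the child that continues the path: the path of the
cuts `v ≤ 0` for `v ∉ R` followed by the cut `d* ≤ 0`. -/
def TGkeep (n : ℕ) (R : Finset (Fin n)) : DTree (Fin (n + 1)) :=
  chainB (((List.ofFn fun i : Fin n => i).filter fun v => decide (v ∉ R)).map Fin.castSucc)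
    (DTree.node (Fin.last n) 0 (.leaf .red) (.leaf .blue))

/-- The tree obtained from `T(U,F)` by applying, at each cut `u ≤ 0` with `u ∉ H`,
the raising operation keeping the child that continues the path, so that exactly
the cuts `u ≤ 0` for `u ∈ H` together with the cut `d* ≤ 0` remain. -/
def TGsel (n : ℕ) (S : Finset (Fin n)) : DTree (Fin (n + 1)) :=
  chainB (((List.ofFn fun i : Fin n => i).filter fun v => decide (v ∈ S)).map Fin.castSucc)
    (DTree.node (Fin.last n) 0 (.leaf .red) (.leaf .blue))

/-- The blue set example of a set `S ⊆ U`: value `1` exactly in the coordinates of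
the elements of `S`. -/
def setEx (N : ℕ) (S : Finset (Fin N)) : Fin (N + 1) → ℝ :=
  indVec (S.image Fin.castSucc)

/-- The training set `E(U,F)` of the hitting-set construction. -/
noncomputable def EUF {N : ℕ} (F : Finset (Finset (Fin N))) :
    Finset (Fin (N + 1) → ℝ) :=
  (F.image (setEx N)) ∪ (Finset.univ.image (vertEx N)) ∪ {starEx N, fun _ => 0}

/-!
Raising a node of `node f t l r` either acts inside `l` or `r`, or replaces the whole tree by `l` or
`r`. Hence the trees raised from a path of cuts are the paths over a sublist of the cuts, the end of
the path being either raised itself or cut off at a blue leaf. The examples `d*` and `0` can only be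
told apart by the cut `d* ≤ 0`, so a tree without errors keeps it, and its remaining cuts `u ≤ 0`
form a set `H`. All examples with value `1` in `d*` are then blue, as they should be, and the
example of `S` is blue iff some cut of `H` sends it to the right, that is, iff `H` meets `S`.
-/

theorem filter_mem_eq_of_sublist {α : Type*} [DecidableEq α] {l l' : List α} (hl : l.Nodup)
    (h : l'.Sublist l) : l.filter (· ∈ l') = l' := by
  have hsub : l'.Sublist (l.filter (· ∈ l')) := by
    simpa only [List.filter_eq_self.2 fun _ ha => decide_eq_true ha] using h.filter (· ∈ l')
  have hperm : l'.Perm (l.filter (· ∈ l')) := by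
    rw [List.perm_ext_iff_of_nodup (hl.sublist h) (hl.filter _)]
    exact fun _ => by simpa using fun ha => h.subset ha
  exact (hsub.eq_of_length hperm.length_eq).symm

section Raising

variable {ι : Type} {f : ι} {t : ℝ} {l r T T' : DTree ι}

/-- `T'` is obtained from `T` by a single subtree raising operation; `RaisedFrom` is the
reflexive-transitive closure of this relation. -/
def RaiseStep (T T' : DTree ι) : Prop :=
  ∃ q b, T.IsInnerPos q ∧ T.raiseAt q b = T'

theorem raisedFrom_iff_reflTransGen : RaisedFrom T T' ↔ Relation.ReflTransGen RaiseStep T T' := by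
  constructor
  · rintro ⟨steps, hvalid, rfl⟩
    induction steps generalizing T with
    | nil => exact .refl
    | cons s steps ih => exact .head ⟨s.1, s.2, hvalid.1, rfl⟩ (ih hvalid.2)
  · intro h
    induction h using Relation.ReflTransGen.head_induction_on with
    | refl => exact ⟨[], trivial, rfl⟩
    | head hstep _ ih =>
      obtain ⟨q, b, hinner, rfl⟩ := hstep
      obtain ⟨steps, hvalid, happly⟩ := ih
      exact ⟨(q, b) :: steps, ⟨hinner, hvalid⟩, happly⟩

theorem DTree.raiseAt_node_nil (b : Bool) :
    (node f t l r).raiseAt [] b = if b then r else l := rfl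

theorem DTree.raiseAt_node_cons (c : Bool) (q : List Bool) (b : Bool) :
    (node f t l r).raiseAt (c :: q) b =
      if c then node f t l (r.raiseAt q b) else node f t (l.raiseAt q b) r := by
  cases c <;> simp only [raiseAt, subtreeAt, replaceAt, Bool.false_eq_true, if_true, if_false] <;>
    split <;> rfl

theorem not_raiseStep_leaf {c : Label} : ¬ RaiseStep (.leaf c) T' := by
  rintro ⟨_ | _, _, ⟨_, _, _, _, h⟩, _⟩ <;> cases h

theorem raiseStep_node_iff :
    RaiseStep (.node f t l r) T' ↔
      (∃ l', RaiseStep l l' ∧ T' = .node f t l' r) ∨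
        (∃ r', RaiseStep r r' ∧ T' = .node f t l r') ∨ T' = l ∨ T' = r := by
  constructor
  · rintro ⟨_ | ⟨_ | _, q⟩, b, hinner, rfl⟩
    · cases b <;> simp [DTree.raiseAt_node_nil]
    · exact .inl ⟨_, ⟨q, b, hinner, rfl⟩, DTree.raiseAt_node_cons ..⟩
    · exact .inr (.inl ⟨_, ⟨q, b, hinner, rfl⟩, DTree.raiseAt_node_cons ..⟩)
  · rintro (⟨_, ⟨q, b, hinner, rfl⟩, rfl⟩ | ⟨_, ⟨q, b, hinner, rfl⟩, rfl⟩ | rfl | rfl)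
    · exact ⟨false :: q, b, hinner, DTree.raiseAt_node_cons ..⟩
    · exact ⟨true :: q, b, hinner, DTree.raiseAt_node_cons ..⟩
    · exact ⟨[], false, ⟨_, _, _, _, rfl⟩, rfl⟩
    · exact ⟨[], true, ⟨_, _, _, _, rfl⟩, rfl⟩

theorem raisedFrom_leaf_iff {c : Label} : RaisedFrom (.leaf c) T' ↔ T' = .leaf c := by
  rw [raisedFrom_iff_reflTransGen, Relation.reflTransGen_iff_eq fun _ => not_raiseStep_leaf]

theorem raisedFrom_node_iff :
    RaisedFrom (.node f t l r) T' ↔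
      (∃ l' r', RaisedFrom l l' ∧ RaisedFrom r r' ∧ T' = .node f t l' r') ∨
        RaisedFrom l T' ∨ RaisedFrom r T' := by
  simp only [raisedFrom_iff_reflTransGen]
  constructor
  · intro h
    induction h with
    | refl => exact .inl ⟨l, r, .refl, .refl, rfl⟩
    | tail _ hstep ih =>
      obtain ⟨l₁, r₁, hl, hr, rfl⟩ | hl | hr := ih
      · obtain ⟨l₂, hl₂, rfl⟩ | ⟨r₂, hr₂, rfl⟩ | rfl | rfl := raiseStep_node_iff.1 hstep
        · exact .inl ⟨l₂, r₁, hl.tail hl₂, hr, rfl⟩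
        · exact .inl ⟨l₁, r₂, hl, hr.tail hr₂, rfl⟩
        · exact .inr (.inl hl)
        · exact .inr (.inr hr)
      · exact .inr (.inl (hl.tail hstep))
      · exact .inr (.inr (hr.tail hstep))
  · rintro (⟨l', r', hl, hr, rfl⟩ | hl | hr)
    · have raise_left : Relation.ReflTransGen RaiseStep (.node f t l r) (.node f t l' r) :=
        hl.lift (DTree.node f t · r) fun _ _ h => raiseStep_node_iff.2 (.inl ⟨_, h, rfl⟩)
      have raise_right : Relation.ReflTransGen RaiseStep (.node f t l' r) (.node f t l' r') :=
        hr.lift (DTree.node f t l') fun _ _ h => raiseStep_node_iff.2 (.inr (.inl ⟨_, h, rfl⟩))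
      exact raise_left.trans raise_right
    · exact .head (raiseStep_node_iff.2 (.inr (.inr (.inl rfl)))) hl
    · exact .head (raiseStep_node_iff.2 (.inr (.inr (.inr rfl)))) hr

end Raising

section Chain

variable {m : ℕ} {fs gs : List (Fin m)} {tail tail' T' : DTree (Fin m)}

theorem chainB_cons {f : Fin m} :
    chainB (f :: fs) tail = .node f 0 (chainB fs tail) (.leaf .blue) := rfl

theorem innerCount_chainB : (chainB fs tail).innerCount = fs.length + tail.innerCount := by
  induction fs with
  | nil => exact (Nat.zero_add _).symm
  | cons f fs ih =>
    simp only [chainB_cons, DTree.innerCount, ih, List.length_cons]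
    ring

theorem classify_chainB_eq_blue_iff {e : Fin m → ℝ} :
    (chainB fs tail).classify e = .blue ↔ (∃ f ∈ fs, 0 < e f) ∨ tail.classify e = .blue := by
  induction fs with
  | nil => simp [chainB]
  | cons f fs ih =>
    rw [chainB_cons, DTree.classify]
    split_ifs with h
    · simp [ih, h.not_gt]
    · simp [DTree.classify, not_le.1 h]

theorem RaisedFrom.chainB_of_sublist (h : gs.Sublist fs) (htail : RaisedFrom tail tail') :
    RaisedFrom (chainB fs tail) (chainB gs tail') := by
  induction h with
  | slnil => exact htail
  | cons _ _ ih => exact raisedFrom_node_iff.2 (.inr (.inl ih))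
  | cons_cons _ _ ih =>
    exact raisedFrom_node_iff.2 (.inl ⟨_, _, ih, raisedFrom_leaf_iff.2 rfl, rfl⟩)

theorem RaisedFrom.exists_eq_chainB (h : RaisedFrom (chainB fs tail) T') :
    ∃ gs tail', gs.Sublist fs ∧ (RaisedFrom tail tail' ∨ tail' = .leaf .blue) ∧
      T' = chainB gs tail' := by
  induction fs generalizing T' with
  | nil => exact ⟨[], T', .slnil, .inl h, rfl⟩
  | cons f fs ih =>
    obtain ⟨l', r', hl, hr, rfl⟩ | hl | hr := raisedFrom_node_iff.1 h
    · obtain ⟨gs, tail', hgs, htail', rfl⟩ := ih hl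
      obtain rfl := raisedFrom_leaf_iff.1 hr
      exact ⟨f :: gs, tail', hgs.cons_cons f, htail', rfl⟩
    · obtain ⟨gs, tail', hgs, htail', rfl⟩ := ih hl
      exact ⟨gs, tail', hgs.cons f, htail', rfl⟩
    · exact ⟨[], .leaf .blue, List.nil_sublist _, .inr rfl, raisedFrom_leaf_iff.1 hr⟩

end Chain

section TrainingSet

variable {n : ℕ}

theorem indVec_pos_iff {S : Finset (Fin n)} {i : Fin n} : 0 < indVec S i ↔ i ∈ S := by
  unfold indVec
  split <;> simp_all

theorem indVec_eq_zero_iff {S : Finset (Fin n)} : (indVec S = fun _ => 0) ↔ S = ∅ := by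
  simp [funext_iff, indVec, Finset.eq_empty_iff_forall_notMem]

theorem labG_indVec_eq_blue_iff {S : Finset (Fin (n + 1))} :
    labG n (indVec S) = .blue ↔ S.Nonempty := by
  simp [labG, indVec_eq_zero_iff, Finset.nonempty_iff_ne_empty]

theorem Label.eq_iff_blue {a b : Label} : a = b ↔ (a = .blue ↔ b = .blue) := by
  cases a <;> cases b <;> simp

theorem errCount_eq_zero_iff {ι : Type} {T : DTree ι} {E : Finset (ι → ℝ)}
    {lab : (ι → ℝ) → Label} :
    errCount T E lab = 0 ↔ ∀ e ∈ E, T.classify e = lab e := by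
  simp [errCount, Finset.filter_eq_empty_iff]

theorem forall_mem_EUF_iff {F : Finset (Finset (Fin n))} {P : (Fin (n + 1) → ℝ) → Prop} :
    (∀ e ∈ EUF F, P e) ↔
      (∀ S ∈ F, P (indVec (S.image Fin.castSucc))) ∧
        (∀ v : Fin n, P (indVec {v.castSucc, Fin.last n})) ∧
        P (indVec {Fin.last n}) ∧ P (indVec ∅) := by
  have hzero : (fun _ => 0 : Fin (n + 1) → ℝ) = indVec ∅ := (indVec_eq_zero_iff.2 rfl).symm
  simp only [EUF, setEx, vertEx, starEx, hzero, Finset.forall_mem_union, Finset.forall_mem_image,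
    Finset.mem_univ, forall_const, Finset.forall_mem_insert, Finset.mem_singleton, forall_eq,
    and_assoc]

theorem errCount_EUF_eq_zero_iff {T : DTree (Fin (n + 1))} {F : Finset (Finset (Fin n))} :
    errCount T (EUF F) (labG n) = 0 ↔
      (∀ S ∈ F, (T.classify (indVec (S.image Fin.castSucc)) = .blue ↔ S.Nonempty)) ∧
        (∀ v : Fin n, T.classify (indVec {v.castSucc, Fin.last n}) = .blue) ∧
        T.classify (indVec {Fin.last n}) = .blue ∧ T.classify (indVec ∅) ≠ .blue := by
  rw [errCount_eq_zero_iff, forall₂_congr fun _ _ => Label.eq_iff_blue, forall_mem_EUF_iff]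
  simp [labG_indVec_eq_blue_iff]

end TrainingSet

section HittingSet

variable {n : ℕ} {F : Finset (Finset (Fin n))}

/-- The cut `d* ≤ 0` with a red left and a blue right child, at which the trees `TG` and `TGsel`
end. -/
def starCut (n : ℕ) : DTree (Fin (n + 1)) :=
  .node (Fin.last n) 0 (.leaf .red) (.leaf .blue)

theorem RaisedFrom.eq_starCut_or_eq_leaf {T' : DTree (Fin (n + 1))}
    (h : RaisedFrom (starCut n) T') : T' = starCut n ∨ ∃ c, T' = .leaf c := by
  obtain ⟨l', r', hl, hr, rfl⟩ | hl | hr := raisedFrom_node_iff.1 h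
  · rw [raisedFrom_leaf_iff.1 hl, raisedFrom_leaf_iff.1 hr]
    exact .inl rfl
  · exact .inr ⟨_, raisedFrom_leaf_iff.1 hl⟩
  · exact .inr ⟨_, raisedFrom_leaf_iff.1 hr⟩

theorem TG_eq_chainB : TG n = chainB ((List.finRange n).map Fin.castSucc) (starCut n) := by
  rw [TG, List.ofFn_eq_map, starCut]

theorem TGsel_eq_chainB (H : Finset (Fin n)) :
    TGsel n H = chainB (((List.finRange n).filter (· ∈ H)).map Fin.castSucc) (starCut n) := by
  rw [← List.ofFn_id]
  rfl

theorem raisedFrom_TG_TGsel (H : Finset (Fin n)) : RaisedFrom (TG n) (TGsel n H) := by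
  rw [TG_eq_chainB, TGsel_eq_chainB]
  exact .chainB_of_sublist (List.filter_sublist.map _) ⟨[], trivial, rfl⟩

theorem innerCount_TGsel (H : Finset (Fin n)) : (TGsel n H).innerCount = H.card + 1 := by
  have hlength : ((List.finRange n).filter (· ∈ H)).length = H.card := by
    rw [← List.toFinset_card_of_nodup ((List.nodup_finRange n).filter _)]
    simp [List.toFinset_filter]
  rw [TGsel_eq_chainB, innerCount_chainB, List.length_map, hlength]
  rfl

theorem classify_TGsel_indVec_eq_blue_iff {H : Finset (Fin n)} {S : Finset (Fin (n + 1))} :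
    (TGsel n H).classify (indVec S) = .blue ↔
      (∃ u ∈ H, u.castSucc ∈ S) ∨ Fin.last n ∈ S := by
  simp [TGsel_eq_chainB, classify_chainB_eq_blue_iff, indVec_pos_iff, starCut, DTree.classify,
    ← not_lt]

theorem errCount_TGsel_eq_zero_iff (hF : ∀ S ∈ F, S.Nonempty) {H : Finset (Fin n)} :
    errCount (TGsel n H) (EUF F) (labG n) = 0 ↔ ∀ S ∈ F, ∃ u ∈ H, u ∈ S := by
  have hset (S : Finset (Fin n)) :
      (TGsel n H).classify (indVec (S.image Fin.castSucc)) = .blue ↔ ∃ u ∈ H, u ∈ S := by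
    simp [classify_TGsel_indVec_eq_blue_iff, Fin.castSucc_ne_last]
  rw [errCount_EUF_eq_zero_iff]
  constructor
  · rintro ⟨hsets, -⟩ S hS
    exact (hset S).1 ((hsets S hS).2 (hF S hS))
  · intro hhit
    refine ⟨fun S hS => iff_of_true ((hset S).2 (hhit S hS)) (hF S hS), ?_, ?_, ?_⟩ <;>
      simp [classify_TGsel_indVec_eq_blue_iff]

theorem errCount_chainB_leaf_ne_zero {fs : List (Fin (n + 1))} (hfs : Fin.last n ∉ fs)
    (c : Label) : errCount (chainB fs (.leaf c)) (EUF F) (labG n) ≠ 0 := by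
  intro herr
  obtain ⟨-, -, hstar, hzero⟩ := errCount_EUF_eq_zero_iff.1 herr
  have hblue : c = .blue := by
    simpa [classify_chainB_eq_blue_iff, indVec_pos_iff, hfs, DTree.classify] using hstar
  exact hzero (classify_chainB_eq_blue_iff.2 (.inr hblue))

theorem RaisedFrom.exists_eq_TGsel {T' : DTree (Fin (n + 1))} (h : RaisedFrom (TG n) T')
    (herr : errCount T' (EUF F) (labG n) = 0) : ∃ H, T' = TGsel n H := by
  rw [TG_eq_chainB] at h
  obtain ⟨gs, tail, hgs, htail, rfl⟩ := h.exists_eq_chainB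
  obtain ⟨us, hus, rfl⟩ := List.sublist_map_iff.1 hgs
  have hleaf (c : Label) : tail ≠ .leaf c := by
    rintro rfl
    exact errCount_chainB_leaf_ne_zero (by simp [Fin.castSucc_ne_last]) c herr
  obtain rfl : tail = starCut n := by
    obtain htail | htail := htail
    · exact htail.eq_starCut_or_eq_leaf.resolve_right fun ⟨c, hc⟩ => hleaf c hc
    · exact absurd htail (hleaf _)
  refine ⟨us.toFinset, ?_⟩
  simp only [TGsel_eq_chainB, List.mem_toFinset,
    filter_mem_eq_of_sublist (List.nodup_finRange n) hus]

end HittingSet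

/-- Let `U = Fin N` be a finite universe, `F` a family of nonempty
subsets of `U` and `0 ≤ κ ≤ |U|`. For every `H ⊆ U`, the tree obtained from
`T(U,F)` by raising away exactly the cuts `u ≤ 0` with `u ∉ H` (keeping the
continuing child each time) has zero errors on `E(U,F)` iff `H` intersects every
member of `F`. Consequently, a decision tree with exactly `κ + 1` inner nodes and
zero errors on `E(U,F)` is obtainable from `T(U,F)` by subtree raising operations
iff `U` contains a hitting set of `F` of size `κ`. -/
theorem stmt10 {N : ℕ} (F : Finset (Finset (Fin N))) (hF : ∀ S ∈ F, S.Nonempty)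
    (κ : ℕ) (hκ : κ ≤ N) :
    (∀ H : Finset (Fin N),
      errCount (TGsel N H) (EUF F) (labG N) = 0 ↔ ∀ S ∈ F, ∃ u ∈ H, u ∈ S)
    ∧ ((∃ T' : DTree (Fin (N + 1)), RaisedFrom (TG N) T' ∧
          T'.innerCount = κ + 1 ∧ errCount T' (EUF F) (labG N) = 0)
      ↔ ∃ H : Finset (Fin N), H.card = κ ∧ ∀ S ∈ F, ∃ u ∈ H, u ∈ S) := by
  refine ⟨fun H => errCount_TGsel_eq_zero_iff hF, ?_, ?_⟩
  · rintro ⟨T', hraised, hcount, herr⟩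
    obtain ⟨H, rfl⟩ := hraised.exists_eq_TGsel herr
    rw [innerCount_TGsel, Nat.add_right_cancel_iff] at hcount
    exact ⟨H, hcount, (errCount_TGsel_eq_zero_iff hF).1 herr⟩
  · rintro ⟨H, rfl, hhit⟩
    exact ⟨TGsel N H, raisedFrom_TG_TGsel H, innerCount_TGsel H,
      (errCount_TGsel_eq_zero_iff hF).2 hhit⟩
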